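/- Let C be a regular Ord-category, f,h: X→Y and g: Y→Z morphisms. Then: (1) f_* ≅ I_Y∘f_♯ and f^* ≅ f°∘I_Y as relations; (2) f_♯ ⊆ f_* and f° ⊆ f^*; (3) (g∘f)_* ≅ g_*∘f_*; (4) (g∘f)^* ≅ f^*∘g^*; (5) f ≼ h iff h_* ⊆ f_* iff f^* ⊆ h^*; (6) I_X ⊆ f^*∘f_*; (7) f_*∘f^* ⊆ I_Y; (8) f^*∘f_*∘f^* ≅ f^* and f_*∘f^*∘f_* ≅ f_*. -/

import Mathlib

open CategoryTheory

universe w v u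

/-- An `Ord`-enrichment of a category: a preorder on each hom-set,
preserved by composition on both sides. -/
class OrdEnrichment (C : Type u) [Category.{v} C] : Type (max u v) where
  ord : ∀ {X Y : C}, (X ⟶ Y) → (X ⟶ Y) → Prop
  ord_refl : ∀ {X Y : C} (f : X ⟶ Y), ord f f
  ord_trans : ∀ {X Y : C} {f g h : X ⟶ Y}, ord f g → ord g h → ord f h
  precomp_ord : ∀ {X Y Z : C} (e : X ⟶ Y) {f g : Y ⟶ Z}, ord f g → ord (e ≫ f) (e ≫ g)
  postcomp_ord : ∀ {X Y Z : C} {f g : X ⟶ Y} (h : Y ⟶ Z), ord f g → ord (f ≫ h) (g ≫ h)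

/-- The preorder on hom-sets of an `Ord`-category. -/
def homLe {C : Type u} [Category.{v} C] [OrdEnrichment C] {X Y : C} (f g : X ⟶ Y) : Prop :=
  OrdEnrichment.ord f g

infixl:50 " ≼ " => homLe

section

variable {C : Type u} [Category.{v} C] [OrdEnrichment C]

/-- A full (ff-) morphism. -/
def IsFF {X Y : C} (m : X ⟶ Y) : Prop :=
  ∀ {A : C} (a a' : A ⟶ X), (a ≫ m) ≼ (a' ≫ m) → a ≼ a'

/-- An ff-monomorphism: a full monomorphism. -/
def IsFFMono {X Y : C} (m : X ⟶ Y) : Prop := IsFF m ∧ Mono m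

/-- An so-morphism: a morphism left orthogonal to every ff-monomorphism. -/
def IsSO {A B : C} (e : A ⟶ B) : Prop :=
  ∀ {X Y : C} (m : X ⟶ Y), IsFFMono m → ∀ (u : A ⟶ X) (v : B ⟶ Y),
    u ≫ m = e ≫ v → ∃ d : B ⟶ X, e ≫ d = u ∧ d ≫ m = v

/-- The (strict) comma object square for the ordered pair `(f, g)`. -/
structure IsCommaSq {X Y Z : C} (f : X ⟶ Y) (g : Z ⟶ Y) (P : C)
    (π₁ : P ⟶ X) (π₂ : P ⟶ Z) : Prop where
  le : (π₁ ≫ f) ≼ (π₂ ≫ g)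
  lift : ∀ {A : C} (α : A ⟶ X) (β : A ⟶ Z), (α ≫ f) ≼ (β ≫ g) →
    ∃! h : A ⟶ P, h ≫ π₁ = α ∧ h ≫ π₂ = β
  lift_ord : ∀ {A : C} {h h' : A ⟶ P}, (h ≫ π₁) ≼ (h' ≫ π₁) → (h ≫ π₂) ≼ (h' ≫ π₂) → h ≼ h'

/-- A 2-pullback square (pullback with the `Ord`-enriched universal property). -/
structure Is2Pullback {X Y Z : C} (f : X ⟶ Z) (g : Y ⟶ Z) (P : C)
    (p : P ⟶ X) (q : P ⟶ Y) : Prop where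
  comm : p ≫ f = q ≫ g
  lift : ∀ {A : C} (a : A ⟶ X) (b : A ⟶ Y), a ≫ f = b ≫ g →
    ∃! h : A ⟶ P, h ≫ p = a ∧ h ≫ q = b
  lift_ord : ∀ {A : C} {h h' : A ⟶ P}, (h ≫ p) ≼ (h' ≫ p) → (h ≫ q) ≼ (h' ≫ q) → h ≼ h'

/-- A binary 2-product. -/
structure Is2Product (X Y : C) (P : C) (p : P ⟶ X) (q : P ⟶ Y) : Prop where
  lift : ∀ {A : C} (a : A ⟶ X) (b : A ⟶ Y), ∃! h : A ⟶ P, h ≫ p = a ∧ h ≫ q = b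
  lift_ord : ∀ {A : C} {h h' : A ⟶ P}, (h ≫ p) ≼ (h' ≫ p) → (h ≫ q) ≼ (h' ≫ q) → h ≼ h'

/-- A 2-equalizer. -/
structure Is2Equalizer {X Y : C} (f g : X ⟶ Y) (E : C) (i : E ⟶ X) : Prop where
  comm : i ≫ f = i ≫ g
  lift : ∀ {A : C} (a : A ⟶ X), a ≫ f = a ≫ g → ∃! h : A ⟶ E, h ≫ i = a
  lift_ord : ∀ {A : C} {h h' : A ⟶ E}, (h ≫ i) ≼ (h' ≫ i) → h ≼ h'

/-- A bicoinserter of a parallel pair. -/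
structure IsBicoinserter {X A E : C} (a b : X ⟶ A) (e : A ⟶ E) : Prop where
  le : (a ≫ e) ≼ (b ≫ e)
  desc : ∀ {F : C} (f : A ⟶ F), (a ≫ f) ≼ (b ≫ f) →
    ∃ t : E ⟶ F, (e ≫ t) ≼ f ∧ f ≼ (e ≫ t)
  desc_ord : ∀ {F : C} {f f' : A ⟶ F} {t t' : E ⟶ F},
    (e ≫ t) ≼ f → f ≼ (e ≫ t) → (e ≫ t') ≼ f' → f' ≼ (e ≫ t') → f ≼ f' → t ≼ t'

/-- A relation from `X` to `Y` in an `Ord`-category: a jointly ff-monomorphic span. -/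
structure RelStr (X Y : C) : Type (max u v) where
  obj : C
  p : obj ⟶ X
  q : obj ⟶ Y
  jointly_ff : ∀ {A : C} (a a' : A ⟶ obj), (a ≫ p) ≼ (a' ≫ p) → (a ≫ q) ≼ (a' ≫ q) → a ≼ a'
  jointly_mono : ∀ {A : C} (a a' : A ⟶ obj), a ≫ p = a' ≫ p → a ≫ q = a' ≫ q → a = a'

/-- `(x, y) ∈_A R`. -/
def RelStr.Mem {X Y : C} (R : RelStr X Y) {A : C} (x : A ⟶ X) (y : A ⟶ Y) : Prop :=
  ∃ h : A ⟶ R.obj, h ≫ R.p = x ∧ h ≫ R.q = y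

/-- `R ⊆ S`: `R` factors through `S` (over `X × Y`). -/
def RelStr.Sub {X Y : C} (R S : RelStr X Y) : Prop :=
  ∃ φ : R.obj ⟶ S.obj, φ ≫ S.p = R.p ∧ φ ≫ S.q = R.q

/-- `R ≅ S`: mutual factorisation. -/
def RelStr.Iso {X Y : C} (R S : RelStr X Y) : Prop := R.Sub S ∧ S.Sub R

/-- The opposite relation `R°`. -/
def RelStr.op {X Y : C} (R : RelStr X Y) : RelStr Y X where
  obj := R.obj
  p := R.q
  q := R.p
  jointly_ff := fun a a' h1 h2 => R.jointly_ff a a' h2 h1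
  jointly_mono := fun a a' h1 h2 => R.jointly_mono a a' h2 h1

/-- A relation is an (order) ideal when it is closed under lowering the first
coordinate and raising the second coordinate. -/
def IsIdealRel {X Y : C} (R : RelStr X Y) : Prop :=
  ∀ {A : C} (x x' : A ⟶ X) (y y' : A ⟶ Y), x' ≼ x → R.Mem x y → y ≼ y' → R.Mem x' y'

/-- The relation `f_♯` given by the span `(1_X, f)`. -/
def sharpRel {X Y : C} (f : X ⟶ Y) : RelStr X Y where
  obj := X
  p := 𝟙 X
  q := f
  jointly_ff := fun a a' h1 _ => by simpa using h1
  jointly_mono := fun a a' h1 _ => by simpa using h1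

/-- The relation `f°`, the opposite of `f_♯`. -/
def cosharpRel {X Y : C} (f : X ⟶ Y) : RelStr Y X := (sharpRel f).op

/-- `M` is the meet (intersection) `R ∧ S` of two relations. -/
def IsMeetRel {X Y : C} (R S M : RelStr X Y) : Prop :=
  M.Sub R ∧ M.Sub S ∧
    ∀ {A : C} (x : A ⟶ X) (y : A ⟶ Y), R.Mem x y → S.Mem x y → M.Mem x y

/-- `T` is the composite `S ∘ R` of the relations `R : X ↬ Y` and `S : Y ↬ Z`,
obtained via the (so-morphism, ff-monomorphism) factorisation of the span
given by the 2-pullback over the middle object. -/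
def IsCompositeRel {X Y Z : C} (R : RelStr X Y) (S : RelStr Y Z) (T : RelStr X Z) : Prop :=
  ∃ (P : C) (p₁ : P ⟶ R.obj) (p₂ : P ⟶ S.obj) (e : P ⟶ T.obj),
    Is2Pullback R.q S.p P p₁ p₂ ∧ IsSO e ∧ e ≫ T.p = p₁ ≫ R.p ∧ e ≫ T.q = p₂ ≫ S.q

/-- `R` is the ideal `f_* = f / 1_Y : X ↬ Y`. -/
def IsStarRel {X Y : C} (f : X ⟶ Y) (R : RelStr X Y) : Prop :=
  IsCommaSq f (𝟙 Y) R.obj R.p R.q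

/-- `R` is the ideal `f^* = 1_Y / f : Y ↬ X`. -/
def IsCostarRel {X Y : C} (f : X ⟶ Y) (R : RelStr Y X) : Prop :=
  IsCommaSq (𝟙 Y) f R.obj R.p R.q

/-- `R` is the identity ideal `I_X = 1_X / 1_X`. -/
def IsIdRel (X : C) (R : RelStr X X) : Prop :=
  IsCommaSq (𝟙 X) (𝟙 X) R.obj R.p R.q

/-- `S` is the 2-pullback of the relation `R ↣ X × Y` along `f × g`. -/
def IsRelPullback {X Y U V : C} (R : RelStr X Y) (f : U ⟶ X) (g : V ⟶ Y)
    (S : RelStr U V) : Prop :=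
  ∃ h : S.obj ⟶ R.obj, h ≫ R.p = S.p ≫ f ∧ h ≫ R.q = S.q ≫ g ∧
    ∀ {A : C} (a : A ⟶ U) (b : A ⟶ V) (c : A ⟶ R.obj),
      c ≫ R.p = a ≫ f → c ≫ R.q = b ≫ g →
      ∃ d : A ⟶ S.obj, d ≫ S.p = a ∧ d ≫ S.q = b ∧ d ≫ h = c

/-- A binary 2-coproduct. -/
structure Is2Coproduct (X Y : C) (P : C) (i : X ⟶ P) (j : Y ⟶ P) : Prop where
  desc : ∀ {A : C} (a : X ⟶ A) (b : Y ⟶ A), ∃! h : P ⟶ A, i ≫ h = a ∧ j ≫ h = b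
  desc_ord : ∀ {A : C} {h h' : P ⟶ A}, (i ≫ h) ≼ (i ≫ h') → (j ≫ h) ≼ (j ≫ h') → h ≼ h'

/-- A ternary 2-coproduct. -/
structure Is3Coproduct (X Y Z : C) (P : C) (i : X ⟶ P) (j : Y ⟶ P) (k : Z ⟶ P) : Prop where
  desc : ∀ {A : C} (a : X ⟶ A) (b : Y ⟶ A) (c : Z ⟶ A),
    ∃! h : P ⟶ A, i ≫ h = a ∧ j ≫ h = b ∧ k ≫ h = c
  desc_ord : ∀ {A : C} {h h' : P ⟶ A},
    (i ≫ h) ≼ (i ≫ h') → (j ≫ h) ≼ (j ≫ h') → (k ≫ h) ≼ (k ≫ h') → h ≼ h'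

/-- Reflexivity of a relation on `X`: the diagonal factors through it. -/
def ReflexiveRel {X : C} (R : RelStr X X) : Prop := R.Mem (𝟙 X) (𝟙 X)

/-- Transitivity of a relation on `X`: `R ∘ R ⊆ R`. -/
def TransitiveRel {X : C} (R : RelStr X X) : Prop :=
  ∀ T : RelStr X X, IsCompositeRel R R T → T.Sub R

/-- A congruence: a reflexive and transitive ideal. -/
def IsCongruence {X : C} (R : RelStr X X) : Prop :=
  IsIdealRel R ∧ ReflexiveRel R ∧ TransitiveRel R

/-- An effective congruence: `R ≅ f^* ∘ f_*` for some morphism `f`. -/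
def EffectiveCongruence {X : C} (R : RelStr X X) : Prop :=
  ∃ (Y : C) (f : X ⟶ Y) (Fstar : RelStr X Y) (Fco : RelStr Y X) (T : RelStr X X),
    IsStarRel f Fstar ∧ IsCostarRel f Fco ∧ IsCompositeRel Fstar Fco T ∧ R.Iso T

/-- The `Ord`-enriched difunctionality property of a relation. -/
def OrdDifunctional {X Y : C} (D : RelStr X Y) : Prop :=
  ∀ {A : C} (x u u' : A ⟶ X) (y y' v : A ⟶ Y),
    D.Mem x y → y ≼ y' → D.Mem u y' → u ≼ u' → D.Mem u' v → D.Mem x v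

end

/-- A regular `Ord`-category: finite weighted limits, an
(so-morphism, ff-monomorphism) factorisation system, so-morphisms stable under
2-pullbacks, and every so-morphism the bicoinserter of its comma object projections. -/
structure IsRegularOrd (C : Type u) [Category.{v} C] [OrdEnrichment C] : Prop where
  hasTerminal : ∃ T : C, ∀ A : C, ∃ f : A ⟶ T, ∀ g : A ⟶ T, g = f
  has2Products : ∀ X Y : C, ∃ (P : C) (p : P ⟶ X) (q : P ⟶ Y), Is2Product X Y P p q
  has2Equalizers : ∀ {X Y : C} (f g : X ⟶ Y), ∃ (E : C) (i : E ⟶ X), Is2Equalizer f g E i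
  has2Pullbacks : ∀ {X Y Z : C} (f : X ⟶ Z) (g : Y ⟶ Z),
    ∃ (P : C) (p : P ⟶ X) (q : P ⟶ Y), Is2Pullback f g P p q
  hasCommaObjects : ∀ {X Y Z : C} (f : X ⟶ Y) (g : Z ⟶ Y),
    ∃ (P : C) (p : P ⟶ X) (q : P ⟶ Z), IsCommaSq f g P p q
  fact : ∀ {X Y : C} (f : X ⟶ Y), ∃ (I : C) (e : X ⟶ I) (m : I ⟶ Y),
    IsSO e ∧ IsFFMono m ∧ e ≫ m = f
  so_pullback_stable : ∀ {X Y Z P : C} (f : X ⟶ Z) (g : Y ⟶ Z) (p : P ⟶ X) (q : P ⟶ Y),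
    Is2Pullback f g P p q → IsSO g → IsSO p
  so_bicoinserter : ∀ {A B P : C} (e : A ⟶ B), IsSO e →
    ∀ (π₁ π₂ : P ⟶ A), IsCommaSq e e P π₁ π₂ → IsBicoinserter π₁ π₂ e

/-- An `Ord`-Mal'tsev category: every ideal is `Ord`-difunctional. -/
def IsOrdMaltsev (C : Type u) [Category.{v} C] [OrdEnrichment C] : Prop :=
  ∀ (X Y : C) (D : RelStr X Y), IsIdealRel D → OrdDifunctional D

/-- An `Ord`-W-Mal'tsev object: every ideal is `Ord`-difunctional with respect to
generalised elements with domain `Y`. -/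
def IsOrdWMaltsevObj {C : Type u} [Category.{v} C] [OrdEnrichment C] (Y : C) : Prop :=
  ∀ (X Z : C) (R : RelStr X Z), IsIdealRel R →
    ∀ (x u u' : Y ⟶ X) (z z' v : Y ⟶ Z),
      R.Mem x z → z ≼ z' → R.Mem u z' → u ≼ u' → R.Mem u' v → R.Mem x v

/-!
A relation is determined by its generalised elements: `(x, y)` lies in `f_*` iff `f x ≼ y`, and
`(y, x)` lies in `f^*` iff `y ≼ f x`, so each claim about the ideals becomes a statement about
inequalities between arrows. An element of a composite `S ∘ R` has a middle component only after
precomposition with an so-morphism `e`. This does no harm, because a relation `W` from `X` to `Z` is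
an ff-monomorphism into `X × Z` and `e` is orthogonal to it, so that membership in `W` descends
along `e`; for `W = I_Y` this says that `e` reflects `≼`.
-/

section

variable {C : Type u} [Category.{v} C] [OrdEnrichment C] {A B X Y Z : C}

namespace homLe

theorem refl (f : X ⟶ Y) : f ≼ f := OrdEnrichment.ord_refl f

theorem trans {f g h : X ⟶ Y} (hfg : f ≼ g) (hgh : g ≼ h) : f ≼ h :=
  OrdEnrichment.ord_trans hfg hgh

theorem precomp (e : X ⟶ Y) {f g : Y ⟶ Z} (hfg : f ≼ g) : (e ≫ f) ≼ (e ≫ g) :=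
  OrdEnrichment.precomp_ord e hfg

theorem postcomp {f g : X ⟶ Y} (hfg : f ≼ g) (k : Y ⟶ Z) : (f ≫ k) ≼ (g ≫ k) :=
  OrdEnrichment.postcomp_ord k hfg

instance : Trans (homLe (X := X) (Y := Y)) homLe homLe := ⟨trans⟩

end homLe

variable (C) in
/-- Existence of binary 2-products: the part of `IsRegularOrd` that lets so-morphisms, which are
orthogonal to single ff-monomorphisms, be lifted against jointly ff-monomorphic spans. -/
def HasBinary2Products : Prop :=
  ∀ X Y : C, ∃ (P : C) (p : P ⟶ X) (q : P ⟶ Y), Is2Product X Y P p q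

namespace RelStr

theorem mem_self (R : RelStr X Y) : R.Mem R.p R.q := ⟨𝟙 _, Category.id_comp _, Category.id_comp _⟩

theorem Mem.precomp {R : RelStr X Y} {x : B ⟶ X} {y : B ⟶ Y} (h : R.Mem x y) (e : A ⟶ B) :
    R.Mem (e ≫ x) (e ≫ y) := by
  obtain ⟨r, rfl, rfl⟩ := h
  exact ⟨e ≫ r, Category.assoc _ _ _, Category.assoc _ _ _⟩

theorem sub_iff_forall_mem {R S : RelStr X Y} :
    R.Sub S ↔ ∀ {A : C} (x : A ⟶ X) (y : A ⟶ Y), R.Mem x y → S.Mem x y := by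
  refine ⟨fun hRS A x y ⟨r, hp, hq⟩ ↦ ?_, fun h ↦ h _ _ R.mem_self⟩
  simpa only [hp, hq] using Mem.precomp (R := S) hRS r

theorem isFFMono_of_comp_eq {R : RelStr X Y} {m : R.obj ⟶ Z} {a : Z ⟶ X} {b : Z ⟶ Y}
    (ha : m ≫ a = R.p) (hb : m ≫ b = R.q) : IsFFMono m := by
  refine ⟨fun c c' hc ↦ R.jointly_ff c c' ?_ ?_, ⟨fun c c' hc ↦ R.jointly_mono c c' ?_ ?_⟩⟩
  · simpa only [Category.assoc, ha] using hc.postcomp a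
  · simpa only [Category.assoc, hb] using hc.postcomp b
  · simpa only [Category.assoc, ha] using hc =≫ a
  · simpa only [Category.assoc, hb] using hc =≫ b

end RelStr

theorem IsCommaSq.mem_iff {f : X ⟶ Y} {g : Z ⟶ Y} {R : RelStr X Z}
    (hR : IsCommaSq f g R.obj R.p R.q) {x : A ⟶ X} {z : A ⟶ Z} :
    R.Mem x z ↔ (x ≫ f) ≼ (z ≫ g) := by
  constructor
  · rintro ⟨r, rfl, rfl⟩
    simpa only [Category.assoc] using hR.le.precomp r
  · exact fun h ↦ (hR.lift x z h).exists

theorem IsStarRel.mem_iff {f : X ⟶ Y} {F : RelStr X Y} (hF : IsStarRel f F)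
    {x : A ⟶ X} {y : A ⟶ Y} : F.Mem x y ↔ (x ≫ f) ≼ y := by
  simpa only [Category.comp_id] using IsCommaSq.mem_iff hF (x := x) (z := y)

theorem IsCostarRel.mem_iff {f : X ⟶ Y} {F : RelStr Y X} (hF : IsCostarRel f F)
    {y : A ⟶ Y} {x : A ⟶ X} : F.Mem y x ↔ y ≼ (x ≫ f) := by
  simpa only [Category.comp_id] using IsCommaSq.mem_iff hF (x := y) (z := x)

theorem IsIdRel.mem_iff {I : RelStr X X} (hI : IsIdRel X I) {x x' : A ⟶ X} :
    I.Mem x x' ↔ x ≼ x' := by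
  simpa only [Category.comp_id] using IsCommaSq.mem_iff hI (x := x) (z := x')

theorem mem_sharpRel_iff {f : X ⟶ Y} {x : A ⟶ X} {y : A ⟶ Y} :
    (sharpRel f).Mem x y ↔ x ≫ f = y := by
  constructor
  · rintro ⟨r, rfl, rfl⟩
    exact congrArg (· ≫ f) (Category.comp_id (Y := X) r)
  · exact fun h ↦ ⟨x, Category.comp_id x, h⟩

theorem mem_cosharpRel_iff {f : X ⟶ Y} {y : A ⟶ Y} {x : A ⟶ X} :
    (cosharpRel f).Mem y x ↔ x ≫ f = y := by
  rw [← mem_sharpRel_iff]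
  exact exists_congr fun _ ↦ and_comm

namespace IsSO

theorem mem_of_comp_mem_comp (hC : HasBinary2Products C) {e : A ⟶ B} (he : IsSO e)
    {W : RelStr X Y} {x : B ⟶ X} {y : B ⟶ Y} (h : W.Mem (e ≫ x) (e ≫ y)) : W.Mem x y := by
  obtain ⟨w, hwp, hwq⟩ := h
  obtain ⟨Q, a, b, hQ⟩ := hC X Y
  obtain ⟨m, ⟨hma, hmb⟩, -⟩ := hQ.lift W.p W.q
  obtain ⟨t, ⟨hta, htb⟩, -⟩ := hQ.lift x y
  have square : w ≫ m = e ≫ t := (hQ.lift (e ≫ x) (e ≫ y)).unique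
    ⟨by rw [Category.assoc, hma, hwp], by rw [Category.assoc, hmb, hwq]⟩
    ⟨by rw [Category.assoc, hta], by rw [Category.assoc, htb]⟩
  obtain ⟨d, -, hd⟩ := he m (RelStr.isFFMono_of_comp_eq hma hmb) w t square
  exact ⟨d, by rw [← hma, reassoc_of% hd, hta], by rw [← hmb, reassoc_of% hd, htb]⟩

theorem le_of_comp_le_comp (hC : HasBinary2Products C) {e : A ⟶ B} (he : IsSO e)
    {I : RelStr X X} (hI : IsIdRel X I) {x x' : B ⟶ X} (h : (e ≫ x) ≼ (e ≫ x')) : x ≼ x' :=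
  hI.mem_iff.1 (he.mem_of_comp_mem_comp hC (hI.mem_iff.2 h))

end IsSO

namespace IsCompositeRel

variable {R : RelStr X Y} {S : RelStr Y Z} {T W : RelStr X Z}

theorem mem (hT : IsCompositeRel R S T) {x : A ⟶ X} {y : A ⟶ Y} {z : A ⟶ Z}
    (hxy : R.Mem x y) (hyz : S.Mem y z) : T.Mem x z := by
  obtain ⟨P, p₁, p₂, e, hP, -, he_p, he_q⟩ := hT
  obtain ⟨r, rfl, rfl⟩ := hxy
  obtain ⟨s, hs, rfl⟩ := hyz
  obtain ⟨k, ⟨rfl, rfl⟩, -⟩ := hP.lift r s hs.symm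
  exact ⟨k ≫ e, by simp only [Category.assoc, he_p], by simp only [Category.assoc, he_q]⟩

theorem exists_isSO_mem (hT : IsCompositeRel R S T) :
    ∃ (P : C) (e : P ⟶ T.obj) (y : P ⟶ Y),
      IsSO e ∧ R.Mem (e ≫ T.p) y ∧ S.Mem y (e ≫ T.q) := by
  obtain ⟨P, p₁, p₂, e, hP, he, he_p, he_q⟩ := hT
  exact ⟨P, e, p₁ ≫ R.q, he, ⟨p₁, he_p.symm, rfl⟩, ⟨p₂, hP.comm.symm, he_q.symm⟩⟩

theorem sub_of_forall_mem (hC : HasBinary2Products C) (hT : IsCompositeRel R S T)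
    (hW : ∀ {A : C} (x : A ⟶ X) (y : A ⟶ Y) (z : A ⟶ Z), R.Mem x y → S.Mem y z → W.Mem x z) :
    T.Sub W := by
  obtain ⟨P, e, y, he, hR, hS⟩ := hT.exists_isSO_mem
  exact he.mem_of_comp_mem_comp hC (hW _ y _ hR hS)

theorem iso_of_forall_mem_iff (hC : HasBinary2Products C) (hT : IsCompositeRel R S T)
    (hW : ∀ {A : C} (x : A ⟶ X) (z : A ⟶ Z), W.Mem x z ↔ ∃ y, R.Mem x y ∧ S.Mem y z) :
    T.Iso W := by
  refine ⟨hT.sub_of_forall_mem hC fun x y z hxy hyz ↦ (hW x z).2 ⟨y, hxy, hyz⟩, ?_⟩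
  obtain ⟨y, hxy, hyz⟩ := (hW _ _).1 W.mem_self
  exact hT.mem hxy hyz

end IsCompositeRel

namespace IsStarRel

variable {f h : X ⟶ Y} {g : Y ⟶ Z} {F H : RelStr X Y} {G : RelStr Y Z}

theorem comp_sharp_id_iso (hC : HasBinary2Products C) (hF : IsStarRel f F) {I : RelStr Y Y}
    (hI : IsIdRel Y I) {T : RelStr X Y} (hT : IsCompositeRel (sharpRel f) I T) : T.Iso F :=
  hT.iso_of_forall_mem_iff hC fun x y ↦ by
    simp only [hF.mem_iff, hI.mem_iff, mem_sharpRel_iff, exists_eq_left']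

theorem sharp_sub (hF : IsStarRel f F) : (sharpRel f).Sub F :=
  RelStr.sub_iff_forall_mem.2 fun x _ hxy ↦
    hF.mem_iff.2 (mem_sharpRel_iff.1 hxy ▸ homLe.refl (x ≫ f))

theorem comp_iso (hC : HasBinary2Products C) (hF : IsStarRel f F) (hG : IsStarRel g G)
    {GF : RelStr X Z} (hGF : IsStarRel (f ≫ g) GF) {T : RelStr X Z}
    (hT : IsCompositeRel F G T) : T.Iso GF :=
  hT.iso_of_forall_mem_iff hC fun x z ↦ by
    simp only [hF.mem_iff, hG.mem_iff, hGF.mem_iff, ← Category.assoc]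
    exact ⟨fun hxz ↦ ⟨x ≫ f, homLe.refl _, hxz⟩, fun ⟨_, hxy, hyz⟩ ↦ (hxy.postcomp g).trans hyz⟩

theorem le_iff_sub (hF : IsStarRel f F) (hH : IsStarRel h H) : f ≼ h ↔ H.Sub F := by
  simp only [RelStr.sub_iff_forall_mem, hF.mem_iff, hH.mem_iff]
  refine ⟨fun hfh A x y hxy ↦ (hfh.precomp x).trans hxy, fun hHF ↦ ?_⟩
  simpa only [Category.id_comp] using hHF (𝟙 X) h (by simpa using homLe.refl h)

end IsStarRel

namespace IsCostarRel

variable {f h : X ⟶ Y} {g : Y ⟶ Z} {F H : RelStr Y X} {G : RelStr Z Y}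

theorem comp_id_cosharp_iso (hC : HasBinary2Products C) (hF : IsCostarRel f F) {I : RelStr Y Y}
    (hI : IsIdRel Y I) {T : RelStr Y X} (hT : IsCompositeRel I (cosharpRel f) T) : T.Iso F :=
  hT.iso_of_forall_mem_iff hC fun y x ↦ by
    simp only [hF.mem_iff, hI.mem_iff, mem_cosharpRel_iff, exists_eq_right']

theorem cosharp_sub (hF : IsCostarRel f F) : (cosharpRel f).Sub F :=
  RelStr.sub_iff_forall_mem.2 fun _ x hyx ↦
    hF.mem_iff.2 (mem_cosharpRel_iff.1 hyx ▸ homLe.refl (x ≫ f))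

theorem comp_iso (hC : HasBinary2Products C) (hF : IsCostarRel f F) (hG : IsCostarRel g G)
    {GF : RelStr Z X} (hGF : IsCostarRel (f ≫ g) GF) {T : RelStr Z X}
    (hT : IsCompositeRel G F T) : T.Iso GF :=
  hT.iso_of_forall_mem_iff hC fun z x ↦ by
    simp only [hF.mem_iff, hG.mem_iff, hGF.mem_iff, ← Category.assoc]
    exact ⟨fun hzx ↦ ⟨x ≫ f, hzx, homLe.refl _⟩, fun ⟨_, hzy, hyx⟩ ↦ hzy.trans (hyx.postcomp g)⟩

theorem le_iff_sub (hF : IsCostarRel f F) (hH : IsCostarRel h H) : f ≼ h ↔ F.Sub H := by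
  simp only [RelStr.sub_iff_forall_mem, hF.mem_iff, hH.mem_iff]
  refine ⟨fun hfh A y x hyx ↦ hyx.trans (hfh.precomp x), fun hFH ↦ ?_⟩
  simpa only [Category.id_comp] using hFH f (𝟙 X) (by simpa using homLe.refl f)

end IsCostarRel

section Adjunction

variable {f : X ⟶ Y} {F : RelStr X Y} {F' : RelStr Y X}

theorem id_sub_comp_star_costar (hF : IsStarRel f F) (hF' : IsCostarRel f F') {I : RelStr X X}
    (hI : IsIdRel X I) {T : RelStr X X} (hT : IsCompositeRel F F' T) : I.Sub T :=
  RelStr.sub_iff_forall_mem.2 fun x _ hxx' ↦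
    hT.mem (hF.mem_iff.2 (homLe.refl (x ≫ f))) (hF'.mem_iff.2 ((hI.mem_iff.1 hxx').postcomp f))

theorem comp_costar_star_sub_id (hC : HasBinary2Products C) (hF : IsStarRel f F)
    (hF' : IsCostarRel f F') {I : RelStr Y Y} (hI : IsIdRel Y I) {T : RelStr Y Y}
    (hT : IsCompositeRel F' F T) : T.Sub I :=
  hT.sub_of_forall_mem hC fun _ _ _ hyx hxy' ↦
    hI.mem_iff.2 ((hF'.mem_iff.1 hyx).trans (hF.mem_iff.1 hxy'))

theorem comp_le_comp_of_mem_comp_star_costar (hC : HasBinary2Products C) (hF : IsStarRel f F)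
    (hF' : IsCostarRel f F') {I : RelStr Y Y} (hI : IsIdRel Y I) {T : RelStr X X}
    (hT : IsCompositeRel F F' T) {x x' : A ⟶ X} (hxx' : T.Mem x x') : (x ≫ f) ≼ (x' ≫ f) := by
  obtain ⟨P, e, y, he, hy, hy'⟩ := hT.exists_isSO_mem
  have hT_le : (T.p ≫ f) ≼ (T.q ≫ f) := he.le_of_comp_le_comp hC hI <| calc
    e ≫ T.p ≫ f = (e ≫ T.p) ≫ f := (Category.assoc _ _ _).symm
    _ ≼ y := hF.mem_iff.1 hy
    _ ≼ (e ≫ T.q) ≫ f := hF'.mem_iff.1 hy'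
    _ = e ≫ T.q ≫ f := Category.assoc _ _ _
  obtain ⟨t, rfl, rfl⟩ := hxx'
  simpa only [Category.assoc] using hT_le.precomp t

theorem comp_costar_star_costar_iso (hC : HasBinary2Products C) (hF : IsStarRel f F)
    (hF' : IsCostarRel f F') {I : RelStr Y Y} (hI : IsIdRel Y I) {T : RelStr Y Y}
    (hT : IsCompositeRel F' F T) {U : RelStr Y X} (hU : IsCompositeRel T F' U) : U.Iso F' := by
  refine hU.iso_of_forall_mem_iff hC fun y x ↦ ⟨fun hyx ↦ ?_, fun ⟨y', hyy', hy'x⟩ ↦ ?_⟩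
  · exact ⟨x ≫ f, hT.mem hyx (hF.mem_iff.2 (homLe.refl _)), hF'.mem_iff.2 (homLe.refl _)⟩
  · have hle : y ≼ y' := hI.mem_iff.1 <|
      RelStr.sub_iff_forall_mem.1 (comp_costar_star_sub_id hC hF hF' hI hT) y y' hyy'
    exact hF'.mem_iff.2 (hle.trans (hF'.mem_iff.1 hy'x))

theorem comp_star_costar_star_iso (hC : HasBinary2Products C) (hF : IsStarRel f F)
    (hF' : IsCostarRel f F') {I : RelStr Y Y} (hI : IsIdRel Y I) {T : RelStr X X}
    (hT : IsCompositeRel F F' T) {U : RelStr X Y} (hU : IsCompositeRel T F U) : U.Iso F := by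
  refine hU.iso_of_forall_mem_iff hC fun x y ↦ ⟨fun hxy ↦ ?_, fun ⟨x', hxx', hx'y⟩ ↦ ?_⟩
  · exact ⟨x, hT.mem (hF.mem_iff.2 (homLe.refl _)) (hF'.mem_iff.2 (homLe.refl _)), hxy⟩
  · have hle : (x ≫ f) ≼ (x' ≫ f) := comp_le_comp_of_mem_comp_star_costar hC hF hF' hI hT hxx'
    exact hF.mem_iff.2 (hle.trans (hF.mem_iff.1 hx'y))

end Adjunction

end

theorem statement2_general {C : Type u} [Category.{v} C] [OrdEnrichment C]
    (hC : HasBinary2Products C)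
    {X Y Z : C} (f h : X ⟶ Y) (g : Y ⟶ Z)
    (IX : RelStr X X) (hIX : IsIdRel X IX) (IY : RelStr Y Y) (hIY : IsIdRel Y IY)
    (Fstar : RelStr X Y) (hFstar : IsStarRel f Fstar)
    (Fco : RelStr Y X) (hFco : IsCostarRel f Fco)
    (Hstar : RelStr X Y) (hHstar : IsStarRel h Hstar)
    (Hco : RelStr Y X) (hHco : IsCostarRel h Hco)
    (Gstar : RelStr Y Z) (hGstar : IsStarRel g Gstar)
    (Gco : RelStr Z Y) (hGco : IsCostarRel g Gco)
    (GFstar : RelStr X Z) (hGFstar : IsStarRel (f ≫ g) GFstar)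
    (GFco : RelStr Z X) (hGFco : IsCostarRel (f ≫ g) GFco) :
    (∀ T : RelStr X Y, IsCompositeRel (sharpRel f) IY T → T.Iso Fstar) ∧
    (∀ T : RelStr Y X, IsCompositeRel IY (cosharpRel f) T → T.Iso Fco) ∧
    ((sharpRel f).Sub Fstar ∧ (cosharpRel f).Sub Fco) ∧
    (∀ T : RelStr X Z, IsCompositeRel Fstar Gstar T → T.Iso GFstar) ∧
    (∀ T : RelStr Z X, IsCompositeRel Gco Fco T → T.Iso GFco) ∧
    ((f ≼ h ↔ Hstar.Sub Fstar) ∧ (f ≼ h ↔ Fco.Sub Hco)) ∧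
    (∀ T : RelStr X X, IsCompositeRel Fstar Fco T → IX.Sub T) ∧
    (∀ T : RelStr Y Y, IsCompositeRel Fco Fstar T → T.Sub IY) ∧
    (∀ (T : RelStr Y Y) (U : RelStr Y X),
      IsCompositeRel Fco Fstar T → IsCompositeRel T Fco U → U.Iso Fco) ∧
    (∀ (T : RelStr X X) (U : RelStr X Y),
      IsCompositeRel Fstar Fco T → IsCompositeRel T Fstar U → U.Iso Fstar) :=
  ⟨fun _ hT ↦ hFstar.comp_sharp_id_iso hC hIY hT,
    fun _ hT ↦ hFco.comp_id_cosharp_iso hC hIY hT,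
    ⟨hFstar.sharp_sub, hFco.cosharp_sub⟩,
    fun _ hT ↦ hFstar.comp_iso hC hGstar hGFstar hT,
    fun _ hT ↦ hFco.comp_iso hC hGco hGFco hT,
    ⟨hFstar.le_iff_sub hHstar, hFco.le_iff_sub hHco⟩,
    fun _ hT ↦ id_sub_comp_star_costar hFstar hFco hIX hT,
    fun _ hT ↦ comp_costar_star_sub_id hC hFstar hFco hIY hT,
    fun _ _ hT hU ↦ comp_costar_star_costar_iso hC hFstar hFco hIY hT hU,
    fun _ _ hT hU ↦ comp_star_costar_star_iso hC hFstar hFco hIY hT hU⟩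

/-- Basic properties of the ideals `f_*` and `f^*` in a regular `Ord`-category. -/
theorem statement2 {C : Type u} [Category.{v} C] [OrdEnrichment C] (hC : IsRegularOrd C)
    {X Y Z : C} (f h : X ⟶ Y) (g : Y ⟶ Z)
    (IX : RelStr X X) (hIX : IsIdRel X IX) (IY : RelStr Y Y) (hIY : IsIdRel Y IY)
    (Fstar : RelStr X Y) (hFstar : IsStarRel f Fstar)
    (Fco : RelStr Y X) (hFco : IsCostarRel f Fco)
    (Hstar : RelStr X Y) (hHstar : IsStarRel h Hstar)
    (Hco : RelStr Y X) (hHco : IsCostarRel h Hco)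
    (Gstar : RelStr Y Z) (hGstar : IsStarRel g Gstar)
    (Gco : RelStr Z Y) (hGco : IsCostarRel g Gco)
    (GFstar : RelStr X Z) (hGFstar : IsStarRel (f ≫ g) GFstar)
    (GFco : RelStr Z X) (hGFco : IsCostarRel (f ≫ g) GFco) :
    -- (1) `f_* ≅ I_Y ∘ f_♯` and `f^* ≅ f° ∘ I_Y`
    (∀ T : RelStr X Y, IsCompositeRel (sharpRel f) IY T → T.Iso Fstar) ∧
    (∀ T : RelStr Y X, IsCompositeRel IY (cosharpRel f) T → T.Iso Fco) ∧
    -- (2) `f_♯ ⊆ f_*` and `f° ⊆ f^*`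
    ((sharpRel f).Sub Fstar ∧ (cosharpRel f).Sub Fco) ∧
    -- (3) `(g ∘ f)_* ≅ g_* ∘ f_*`
    (∀ T : RelStr X Z, IsCompositeRel Fstar Gstar T → T.Iso GFstar) ∧
    -- (4) `(g ∘ f)^* ≅ f^* ∘ g^*`
    (∀ T : RelStr Z X, IsCompositeRel Gco Fco T → T.Iso GFco) ∧
    -- (5) `f ≼ h ↔ h_* ⊆ f_* ↔ f^* ⊆ h^*`
    ((f ≼ h ↔ Hstar.Sub Fstar) ∧ (f ≼ h ↔ Fco.Sub Hco)) ∧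
    -- (6) `I_X ⊆ f^* ∘ f_*`
    (∀ T : RelStr X X, IsCompositeRel Fstar Fco T → IX.Sub T) ∧
    -- (7) `f_* ∘ f^* ⊆ I_Y`
    (∀ T : RelStr Y Y, IsCompositeRel Fco Fstar T → T.Sub IY) ∧
    -- (8) `f^* ∘ f_* ∘ f^* ≅ f^*` and `f_* ∘ f^* ∘ f_* ≅ f_*`
    (∀ (T : RelStr Y Y) (U : RelStr Y X),
      IsCompositeRel Fco Fstar T → IsCompositeRel T Fco U → U.Iso Fco) ∧
    (∀ (T : RelStr X X) (U : RelStr X Y),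
      IsCompositeRel Fstar Fco T → IsCompositeRel T Fstar U → U.Iso Fstar) :=
  statement2_general hC.has2Products f h g IX hIX IY hIY Fstar hFstar Fco hFco Hstar hHstar
    Hco hHco Gstar hGstar Gco hGco GFstar hGFstar GFco hGFco
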